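/- Let P be a well-labeled finished PASG for the symbolic MDP M with root n₀ (L_c(n₀)=val0), let σ be a memoryless strategy of M, and let σ̂ be the strategy on the MDP induced by P defined by: σ̂(τ̂)=cover if τ̂ ends in a covered node, and σ̂(τ̂)=σ(last state of the concretization of τ̂) if τ̂ is concretizable. Then every trace of the MDP induced by P that is generated with positive probability under σ̂ and whose last action is not cover is concretizable. -/

import Mathlib

/-!
By induction, every prefix `h` of a trace of positive probability under `σh` is concretizable.
If the step after `h` is a cover step, the concretization deletes it. Otherwise `h` ends in a
non-covered node, so `σh` plays the command which `σ` chooses at the end of the concretization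
of `h`; that command is enabled there, so its guard holds and the concretization extends by the
assignment matched with the successor node.
-/

open scoped ENNReal

/-- A Markov decision process with state space `S` and action set `A`:
`P s a s'` is the transition probability. For the MDPs considered here, for every
`s, a` the total mass `∑' s', P s a s'` is `1` (the action is enabled) or `0`. -/
structure MDP (S : Type*) (A : Type*) where
  P : S → A → S → ℝ≥0∞
  init : S

namespace MDP

variable {S A : Type*}

/-- An action is enabled in a state iff its outgoing probabilities sum to one. -/
def Enabled (M : MDP S A) (s : S) (a : A) : Prop :=
  (∑' s', M.P s a s') = 1

/-- The last state of a history (a list of action/state steps), given the start state. -/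
def lastSt (s : S) (h : List (A × S)) : S :=
  ((h.getLast?).map Prod.snd).getD s

open Classical in
/-- Probability of a finite path (a list of action/state steps) from state `s` with
accumulated history `h`, under the (history-dependent) strategy `σ`. -/
noncomputable def pathProb (M : MDP S A) (σ : List (A × S) → A) :
    S → List (A × S) → List (A × S) → ℝ≥0∞
  | _, _, [] => 1
  | s, h, (a, s') :: rest =>
      (if σ h = a then M.P s a s' else 0) * pathProb M σ s' (h ++ [(a, s')]) rest

/-- The path visits the target set `E` exactly at its final state and never before. -/
def FirstHit (E : Set S) : S → List (A × S) → Prop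
  | s, [] => s ∈ E
  | s, (_, s') :: rest => s ∉ E ∧ FirstHit E s' rest

/-- A finite trace: every step has positive probability. -/
def IsTrace (M : MDP S A) : S → List (A × S) → Prop
  | _, [] => True
  | s, (a, s') :: rest => 0 < M.P s a s' ∧ IsTrace M s' rest

/-- A strategy is valid from `s₀` if it always chooses an enabled action
whenever some action is enabled in the current state. -/
def ValidFrom (M : MDP S A) (s₀ : S) (σ : List (A × S) → A) : Prop :=
  ∀ h : List (A × S), (∃ a, M.Enabled (lastSt s₀ h) a) → M.Enabled (lastSt s₀ h) (σ h)

/-- Probability of reaching `E` from `s₀` under strategy `σ`: the total mass of the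
(pairwise incompatible) first-hitting paths. -/
noncomputable def reachProbFrom (M : MDP S A) (σ : List (A × S) → A) (s₀ : S)
    (E : Set S) : ℝ≥0∞ :=
  ∑' l : {l : List (A × S) // FirstHit E s₀ l}, pathProb M σ s₀ [] l.1

/-- Maximal probability of reaching `E` from `s`. -/
noncomputable def PmaxFrom (M : MDP S A) (E : Set S) (s : S) : ℝ≥0∞ :=
  ⨆ σ : {σ : List (A × S) → A // ValidFrom M s σ}, reachProbFrom M σ.1 s E

/-- Maximal probability of reaching `E` from the initial state. -/
noncomputable def Pmax (M : MDP S A) (E : Set S) : ℝ≥0∞ :=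
  PmaxFrom M E M.init

/-- Minimal probability of reaching `E` from `s`. -/
noncomputable def PminFrom (M : MDP S A) (E : Set S) (s : S) : ℝ≥0∞ :=
  ⨅ σ : {σ : List (A × S) → A // ValidFrom M s σ}, reachProbFrom M σ.1 s E

/-- Minimal probability of reaching `E` from the initial state. -/
noncomputable def Pmin (M : MDP S A) (E : Set S) : ℝ≥0∞ :=
  PminFrom M E M.init

end MDP

/-- A symbolic MDP over states `Val` (valuations of the variables): a set of commands,
each with a guard and a finite-support distribution over assignments (semantically,
state transformers `Val → Val`), and an initial valuation. -/
structure SymMDP (Val : Type*) (Cmd : Type*) where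
  guard : Cmd → Val → Prop
  dist : Cmd → PMF (Val → Val)
  finSupp : ∀ c, (dist c).support.Finite
  init : Val

open Classical in
/-- The MDP induced by a symbolic MDP: command `c` is enabled in `s` iff its guard
holds, and then the next-state distribution is the pushforward of `dist c` under
evaluation at `s`. -/
noncomputable def SymMDP.toMDP {Val Cmd : Type*} (M : SymMDP Val Cmd) : MDP Val Cmd where
  P := fun s c s' => if M.guard c s then ((M.dist c).map fun a => a s) s' else 0
  init := M.init

/-- Three-valued truth values for evaluating Boolean expressions on abstract states. -/
inductive TV
  | tt
  | ff
  | uk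

/-- An abstract domain over the concrete state set `Val`, with partially ordered
abstract states `AS`, abstraction `abstr`, concretization `conc`, and the Galois
condition `abstr A ≤ b ↔ A ⊆ conc b`. -/
structure AbsDom (Val : Type*) (AS : Type*) [PartialOrder AS] where
  abstr : Set Val → AS
  conc : AS → Set Val
  galois : ∀ (A : Set Val) (b : AS), abstr A ≤ b ↔ A ⊆ conc b

namespace AbsDom

variable {Val AS : Type*} [PartialOrder AS]

open Classical in
/-- Three-valued evaluation of a Boolean expression `b` on an abstract state:
`tt` if it holds in all concretizations, `ff` if in none, `uk` otherwise. -/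
noncomputable def beval (D : AbsDom Val AS) (b : Val → Prop) (x : AS) : TV :=
  if ∀ s ∈ D.conc x, b s then TV.tt
  else if ∀ s ∈ D.conc x, ¬ b s then TV.ff
  else TV.uk

/-- The abstract post operator: `post a x = abstr (a '' conc x)`. -/
def post (D : AbsDom Val AS) (a : Val → Val) (x : AS) : AS :=
  D.abstr (a '' D.conc x)

end AbsDom

open Classical in
/-- Two-valued evaluation of a Boolean expression in a concrete state, as a `TV`. -/
noncomputable def cevalTV {Val : Type*} (b : Val → Prop) (s : Val) : TV :=
  if b s then TV.tt else TV.ff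

/-- A probabilistic adaptive simulation graph (PASG). A transition edge `(n, c, f) ∈ ET`
goes from node `n` via command `c`; `f` matches each assignment in the support of `c`'s
distribution with its result node (thereby inducing the node distribution of the edge as
the pushforward of the assignment distribution). `EC n = some n'` means node `n` is
covered by its covering node `n'`; `Lc`/`La` are the concrete/abstract labelings. -/
structure PASG (Val AS Cmd Node : Type*) where
  ET : Set (Node × Cmd × ((Val → Val) → Node))
  EC : Node → Option Node
  Lc : Node → Val
  La : Node → AS

namespace PASG

variable {Val AS Cmd Node : Type*} [PartialOrder AS]

/-- A node is covered iff it has an outgoing covering edge. -/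
def Covered (P : PASG Val AS Cmd Node) (n : Node) : Prop := P.EC n ≠ none

/-- A node is expanded iff every command enabled in its concrete label has a
transition edge. -/
def Expanded (M : SymMDP Val Cmd) (P : PASG Val AS Cmd Node) (n : Node) : Prop :=
  ∀ c, M.guard c (P.Lc n) → ∃ f, (n, c, f) ∈ P.ET

/-- A PASG is finished iff every node is covered or expanded. -/
def Finished (M : SymMDP Val Cmd) (P : PASG Val AS Cmd Node) : Prop :=
  ∀ n, P.Covered n ∨ P.Expanded M n

/-- The well-labeledness constraints A1, A2, B1, B2, C1, C2, C3, D1. -/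
structure WellLabeled (M : SymMDP Val Cmd) (D : AbsDom Val AS)
    (P : PASG Val AS Cmd Node) : Prop where
  /-- A1: the abstract label contains the concrete label. -/
  A1 : ∀ n, P.Lc n ∈ D.conc (P.La n)
  /-- A2: the concrete label exactly represents the abstract label w.r.t. enabledness. -/
  A2 : ∀ n c, D.beval (M.guard c) (P.La n) = cevalTV (M.guard c) (P.Lc n)
  /-- B1: the command of a transition edge is enabled in the concrete label of its source. -/
  B1 : ∀ e ∈ P.ET, M.guard e.2.1 (P.Lc e.1)
  /-- B2 (probabilities): result nodes of distinct assignments are distinct, hence the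
  induced node distribution gives each result node exactly the assignment's probability. -/
  B2inj : ∀ e ∈ P.ET, Set.InjOn e.2.2 (M.dist e.2.1).support
  /-- B2 (concrete labels): the concrete label of a result node is the result of the
  corresponding assignment. -/
  B2c : ∀ e ∈ P.ET, ∀ a ∈ (M.dist e.2.1).support, P.Lc (e.2.2 a) = a (P.Lc e.1)
  /-- B2 (abstract labels): the abstract label of a result node overapproximates the
  abstract post of the source. -/
  B2a : ∀ e ∈ P.ET, ∀ a ∈ (M.dist e.2.1).support, D.post a (P.La e.1) ≤ P.La (e.2.2 a)
  /-- C1: the abstract label of the covering node contains the concrete label of the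
  covered node. -/
  C1 : ∀ n n', P.EC n = some n' → P.Lc n ∈ D.conc (P.La n')
  /-- C2: the covering node is at least as abstract as the covered node. -/
  C2 : ∀ n n', P.EC n = some n' → P.La n ≤ P.La n'
  /-- C3: a covering node is not itself covered. -/
  C3 : ∀ n n', P.EC n = some n' → P.EC n' = none
  /-- D1: at most one node with a given concrete label is non-covered. -/
  D1 : ∀ n n', n ≠ n' → P.Lc n = P.Lc n' → P.Covered n ∨ P.Covered n'

open Classical in
/-- The MDP induced by a finished PASG with root `n₀`: in a non-covered node a command
is enabled iff it has a transition edge (with the induced node distribution); a covered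
node has only the extra `cover` action (`Sum.inr ()`), leading with probability `1` to
its covering node. -/
noncomputable def toMDP (M : SymMDP Val Cmd) (P : PASG Val AS Cmd Node) (n₀ : Node) :
    MDP Node (Cmd ⊕ Unit) where
  init := n₀
  P := fun n act m =>
    match act with
    | Sum.inl c =>
        if h : P.EC n = none ∧ ∃ f, (n, c, f) ∈ P.ET then ((M.dist c).map h.2.choose) m
        else 0
    | Sum.inr _ =>
        match P.EC n with
        | some n' => if m = n' then 1 else 0
        | none => 0

end PASG

/-- `ConcrRel M P n s l τ` relates a trace `l` of the PASG-induced MDP starting in node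
`n` with its concretization `τ`, a concrete trace starting in state `s`: cover steps are
deleted, and each transition step via an edge `(n, c, f)` and an assignment `a` in the
support of `d_c` (whose result node is `f a`, cf. constraint B2) requires the guard of
`c` to hold in the recomputed concrete state and moves it to `a s`. -/
inductive ConcrRel {Val AS Cmd Node : Type*} (M : SymMDP Val Cmd)
    (P : PASG Val AS Cmd Node) :
    Node → Val → List ((Cmd ⊕ Unit) × Node) → List (Cmd × Val) → Prop
  | nil (n : Node) (s : Val) : ConcrRel M P n s [] []
  | cover {n n' : Node} {s : Val} {l : List ((Cmd ⊕ Unit) × Node)} {τ : List (Cmd × Val)}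
      (hc : P.EC n = some n') (ih : ConcrRel M P n' s l τ) :
      ConcrRel M P n s ((Sum.inr (), n') :: l) τ
  | step {n : Node} {s : Val} {c : Cmd} {f : (Val → Val) → Node} {a : Val → Val}
      {l : List ((Cmd ⊕ Unit) × Node)} {τ : List (Cmd × Val)}
      (he : (n, c, f) ∈ P.ET) (ha : a ∈ (M.dist c).support) (hg : M.guard c s)
      (ih : ConcrRel M P (f a) (a s) l τ) :
      ConcrRel M P n s ((Sum.inl c, f a) :: l) ((c, a s) :: τ)

namespace MDP

variable {S A : Type*}

theorem lastSt_cons (s s' : S) (a : A) (l : List (A × S)) :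
    lastSt s ((a, s') :: l) = lastSt s' l := by
  cases h : l.getLast? <;> simp [lastSt, List.getLast?_cons, h]

theorem pathProb_append (M : MDP S A) (σ : List (A × S) → A) (s : S) (h l l' : List (A × S)) :
    M.pathProb σ s h (l ++ l') =
      M.pathProb σ s h l * M.pathProb σ (lastSt s l) (h ++ l) l' := by
  induction l generalizing s h with
  | nil => simp [pathProb, lastSt]
  | cons p l ih =>
    obtain ⟨a, s'⟩ := p
    simp [pathProb, lastSt_cons, ih, mul_assoc]

theorem pathProb_concat_pos_iff {M : MDP S A} {σ : List (A × S) → A} {s s' : S}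
    {h l : List (A × S)} {a : A} :
    0 < M.pathProb σ s h (l ++ [(a, s')]) ↔
      0 < M.pathProb σ s h l ∧ σ (h ++ l) = a ∧ 0 < M.P (lastSt s l) a s' := by
  simp [pathProb_append, pathProb, pos_iff_ne_zero, and_left_comm]

end MDP

theorem SymMDP.guard_of_enabled {Val Cmd : Type*} {M : SymMDP Val Cmd} {s : Val} {c : Cmd}
    (h : M.toMDP.Enabled s c) : M.guard c s := by
  by_contra hg
  simp [MDP.Enabled, SymMDP.toMDP, hg] at h

section

variable {Val AS Cmd Node : Type*} {M : SymMDP Val Cmd} {P : PASG Val AS Cmd Node}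

namespace PASG

variable {n₀ n m : Node}

theorem exists_edge_of_toMDP_P_inl_pos {c : Cmd}
    (h : 0 < (toMDP M P n₀).P n (Sum.inl c) m) :
    P.EC n = none ∧ ∃ f, (n, c, f) ∈ P.ET ∧ ∃ a ∈ (M.dist c).support, f a = m := by
  simp only [toMDP] at h
  split_ifs at h with hE
  · have hm : m ∈ ((M.dist c).map hE.2.choose).support := h.ne'
    exact ⟨hE.1, hE.2.choose, hE.2.choose_spec, (PMF.mem_support_map_iff _ _ _).1 hm⟩
  · exact absurd h (lt_irrefl 0)

theorem toMDP_P_inr_pos_iff {u : Unit} :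
    0 < (toMDP M P n₀).P n (Sum.inr u) m ↔ P.EC n = some m := by
  cases hE : P.EC n <;> simp [toMDP, hE, pos_iff_ne_zero, eq_comm]

end PASG

namespace ConcrRel

variable {n : Node} {s : Val} {l l' : List ((Cmd ⊕ Unit) × Node)} {τ τ' : List (Cmd × Val)}

theorem append (h : ConcrRel M P n s l τ)
    (h' : ConcrRel M P (MDP.lastSt n l) (MDP.lastSt s τ) l' τ') :
    ConcrRel M P n s (l ++ l') (τ ++ τ') := by
  induction h with
  | nil n s => exact h'
  | cover hc _ ih =>
    rw [MDP.lastSt_cons] at h'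
    exact .cover hc (ih h')
  | step he ha hg _ ih =>
    rw [MDP.lastSt_cons, MDP.lastSt_cons] at h'
    exact .step he ha hg (ih h')

theorem concat_cover {n' : Node} (h : ConcrRel M P n s l τ)
    (hc : P.EC (MDP.lastSt n l) = some n') :
    ConcrRel M P n s (l ++ [(Sum.inr (), n')]) τ := by
  simpa using h.append (.cover hc (.nil _ _))

theorem concat_step {c : Cmd} {f : (Val → Val) → Node} {a : Val → Val}
    (h : ConcrRel M P n s l τ) (he : (MDP.lastSt n l, c, f) ∈ P.ET)
    (ha : a ∈ (M.dist c).support) (hg : M.guard c (MDP.lastSt s τ)) :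
    ConcrRel M P n s (l ++ [(Sum.inl c, f a)]) (τ ++ [(c, a (MDP.lastSt s τ))]) :=
  h.append (.step he ha hg (.nil _ _))

end ConcrRel

end

theorem traces_concretizable_general {Val AS Cmd Node : Type*}
    (M : SymMDP Val Cmd) (P : PASG Val AS Cmd Node) (n₀ : Node) (s₀ : Val)
    (σ : List (Cmd × Val) → Cmd) (hσ : ∀ τc, M.toMDP.Enabled (MDP.lastSt s₀ τc) (σ τc))
    (σh : List ((Cmd ⊕ Unit) × Node) → Cmd ⊕ Unit)
    (hσh_conc : ∀ (h : List ((Cmd ⊕ Unit) × Node)) (τc : List (Cmd × Val)),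
      P.EC (MDP.lastSt n₀ h) = none → ConcrRel M P n₀ s₀ h τc → σh h = Sum.inl (σ τc))
    (τ : List ((Cmd ⊕ Unit) × Node))
    (hpos : 0 < MDP.pathProb (PASG.toMDP M P n₀) σh n₀ [] τ) :
    ∃ τc : List (Cmd × Val), ConcrRel M P n₀ s₀ τ τc := by
  induction τ using List.reverseRecOn with
  | nil => exact ⟨[], .nil n₀ s₀⟩
  | append_singleton h p ih =>
    obtain ⟨act, m⟩ := p
    obtain ⟨hpos_h, hact, hstep⟩ := MDP.pathProb_concat_pos_iff.1 hpos
    obtain ⟨τc, hτc⟩ := ih hpos_h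
    rcases act with c | ⟨⟩
    · obtain ⟨hnc, f, he, a, ha, rfl⟩ := PASG.exists_edge_of_toMDP_P_inl_pos hstep
      have hc : σ τc = c := Sum.inl.inj ((hσh_conc h τc hnc hτc).symm.trans hact)
      have hg : M.guard c (MDP.lastSt s₀ τc) := hc ▸ SymMDP.guard_of_enabled (hσ τc)
      exact ⟨_, hτc.concat_step he ha hg⟩
    · exact ⟨τc, hτc.concat_cover (PASG.toMDP_P_inr_pos_iff.1 hstep)⟩

/-- With `σ` and `σh` as in Statement 7, every trace of the
PASG-induced MDP that has positive probability under `σh` and whose last action is not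
`cover` is concretizable. -/
theorem traces_concretizable {Val AS Cmd Node : Type*} [PartialOrder AS] [Finite Cmd]
    (M : SymMDP Val Cmd) (D : AbsDom Val AS) (P : PASG Val AS Cmd Node)
    (hwl : PASG.WellLabeled M D P) (hfin : PASG.Finished M P)
    (n₀ : Node) (hroot : P.Lc n₀ = M.init)
    (σ : Val → Cmd) (hσ : ∀ s, (M.toMDP).Enabled s (σ s))
    (σh : List ((Cmd ⊕ Unit) × Node) → Cmd ⊕ Unit)
    (hσh_cov : ∀ h : List ((Cmd ⊕ Unit) × Node),
      P.EC (MDP.lastSt n₀ h) ≠ none → σh h = Sum.inr ())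
    (hσh_conc : ∀ (h : List ((Cmd ⊕ Unit) × Node)) (τc : List (Cmd × Val)),
      P.EC (MDP.lastSt n₀ h) = none → ConcrRel M P n₀ M.init h τc →
      σh h = Sum.inl (σ (MDP.lastSt M.init τc)))
    (τ : List ((Cmd ⊕ Unit) × Node))
    (hpos : 0 < MDP.pathProb (PASG.toMDP M P n₀) σh n₀ [] τ)
    (hlast : ∀ p, τ.getLast? = some p → p.1 ≠ Sum.inr ()) :
    ∃ τc : List (Cmd × Val), ConcrRel M P n₀ M.init τ τc :=
  traces_concretizable_general M P n₀ M.init (σ ∘ MDP.lastSt M.init) (fun _ => hσ _)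
    σh hσh_conc τ hpos
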